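/- Let p, q, r be integers with p, q, r ≥ 3, r even, and 1/p + 1/q + 1/r < 1. Then the semi-infinite kneading sequences u_L = ((a^{p-1}b)^{(r-2)/2} a^{p-2}(ba^{p-1})^{(r-2)/2} b^2)^∞ and v_L = b·u_L are admissible semi-infinite words; in particular u_L <lex u_R and v_L <lex v_R. -/

import Mathlib

/-!
Write `r = 2 m + 2`, so `m ≥ 1`. The period of `u_L` has length `(2 m + 1) p`; cut it into `2 m + 1`
rows of length `p`. The letter in row `i`, column `s` is `b` exactly when
`i < m, s = p - 1`, or `m ≤ i, s = p - 2`, or `i = 2 m, s = p - 1` (`evenWord_row`). The word `v_R`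
is the same construction with `q` for `p` and the two letters exchanged.

In these coordinates the blocks of `a` start at `(i, 0)` with `i ≤ m` and at `(i, p - 1)` with
`m ≤ i < 2 m`. The shift at such a point either is `u_L` or agrees with `u_L` up to a place where it
has `b` and `u_L` has `a`: column `p - 2` of row `m` in the first case, the final `b` of the period
in the second (`aStart_ge`). Each block of `b` but the last in a period is a single letter followed
by an `a`-start, so its lower bound `b · u_L` comes from that `a`-start; the last one begins with
`bb`, which exceeds `ba`. The upper bounds only involve the first four letters, since `v_R` begins
with `bbb` when `q ≥ 4` and with `bbab` when `q = 3`, while in `u_L` the word `bb` is always followed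
by `aa`. Finally, the block starts of `b · u_L` other than `0` are those of `u_L` moved by one.
-/

/-- The two-letter alphabet: `false` is the letter `a`, `true` is the letter `b`;
the order on `Bool` gives `a < b`. -/
abbrev Letter := Bool

/-- The letter `a`. -/
def la : Letter := false

/-- The letter `b`. -/
def lb : Letter := true

/-- Concatenated power `x^n` of a finite word `x`. -/
def pw (x : List Letter) : ℕ → List Letter
  | 0 => []
  | n + 1 => x ++ pw x n

/-- The semi-infinite word `x^∞` obtained by repeating the finite word `x`. -/
def per (x : List Letter) : ℕ → Letter := fun n => x.getD (n % x.length) la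

/-- The semi-infinite word `c·w`: `w` prefixed by the letter `c`. -/
def pre (c : Letter) (w : ℕ → Letter) : ℕ → Letter
  | 0 => c
  | n + 1 => w n

/-- Strict lexicographic order on semi-infinite words: `w <lex w'` iff at the least
index where they differ, `w` carries `a` and `w'` carries `b`. -/
def lexLt (w w' : ℕ → Letter) : Prop :=
  ∃ n, (∀ m < n, w m = w' m) ∧ w n = la ∧ w' n = lb

/-- Non-strict lexicographic order on semi-infinite words. -/
def lexLe (w w' : ℕ → Letter) : Prop := lexLt w w' ∨ w = w'

/-- `k` is a block start of the semi-infinite word `w`. -/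
def blockStartN (w : ℕ → Letter) (k : ℕ) : Prop := k = 0 ∨ w (k - 1) ≠ w k

/-- The shift of the semi-infinite word `w` at `k`. -/
def shiftN (w : ℕ → Letter) (k : ℕ) : ℕ → Letter := fun n => w (k + n)

/-- A semi-infinite word `w` is admissible with respect to the kneading sequences
`uL, uR, vL, vR` if at every block start `k`, the shift of `w` at `k` lies in
`[uL, uR)` if it starts with `a`, and in `[vL, vR)` if it starts with `b`. -/
def AdmissibleN (uL uR vL vR : ℕ → Letter) (w : ℕ → Letter) : Prop :=
  ∀ k, blockStartN w k →
    (w k = la → lexLe uL (shiftN w k) ∧ lexLt (shiftN w k) uR) ∧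
    (w k = lb → lexLe vL (shiftN w k) ∧ lexLt (shiftN w k) vR)

/-- The kneading sequence `u_L = ((a^{p-1}b)^{(r-3)/2} a^{p-1}b²)^∞` for `r` odd. -/
def uLodd (p r : ℕ) : ℕ → Letter :=
  per (pw (List.replicate (p - 1) la ++ [lb]) ((r - 3) / 2) ++
    (List.replicate (p - 1) la ++ [lb, lb]))

/-- The kneading sequence `v_R = ((b^{q-1}a)^{(r-3)/2} b^{q-1}a²)^∞` for `r` odd. -/
def vRodd (q r : ℕ) : ℕ → Letter :=
  per (pw (List.replicate (q - 1) lb ++ [la]) ((r - 3) / 2) ++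
    (List.replicate (q - 1) lb ++ [la, la]))

/-- The kneading sequence `u_L = ((a^{p-1}b)^{(r-2)/2} a^{p-2}(ba^{p-1})^{(r-2)/2} b²)^∞`
for `r` even. -/
def uLeven (p r : ℕ) : ℕ → Letter :=
  per (pw (List.replicate (p - 1) la ++ [lb]) ((r - 2) / 2) ++
    List.replicate (p - 2) la ++
    pw (lb :: List.replicate (p - 1) la) ((r - 2) / 2) ++ [lb, lb])

/-- The kneading sequence `v_R = ((b^{q-1}a)^{(r-2)/2} b^{q-2}(ab^{q-1})^{(r-2)/2} a²)^∞`
for `r` even. -/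
def vReven (q r : ℕ) : ℕ → Letter :=
  per (pw (List.replicate (q - 1) lb ++ [la]) ((r - 2) / 2) ++
    List.replicate (q - 2) lb ++
    pw (la :: List.replicate (q - 1) lb) ((r - 2) / 2) ++ [la, la])

/-! ### The kneading words in rows -/

theorem pw_length (x : List Letter) (k : ℕ) : (pw x k).length = k * x.length := by
  induction k with
  | zero => simp [pw]
  | succ k ih => simp [pw, ih]; ring

theorem pw_getD (x : List Letter) (k i s : ℕ) (hi : i < k) (hs : s < x.length) :
    (pw x k).getD (i * x.length + s) la = x.getD s la := by
  induction k generalizing i with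
  | zero => omega
  | succ k ih =>
    rw [pw]
    cases i with
    | zero => rw [Nat.zero_mul, Nat.zero_add, List.getD_append _ _ _ _ hs]
    | succ i =>
      have e : (i + 1) * x.length + s = x.length + (i * x.length + s) := by ring
      rw [e, List.getD_append_right _ _ _ _ (by omega), Nat.add_sub_cancel_left]
      exact ih i (by omega)

/-- One period `(c^{p-1}d)^m c^{p-2} (dc^{p-1})^m d^2`: the common form of `u_L`
(letters `a, b`) and `v_R` (letters `b, a`). -/
def evenPeriod (c d : Letter) (p m : ℕ) : List Letter :=
  pw (List.replicate (p - 1) c ++ [d]) m ++ List.replicate (p - 2) c ++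
    pw (d :: List.replicate (p - 1) c) m ++ [d, d]

/-- The periodic word with period `evenPeriod c d p m`. -/
def evenWord (c d : Letter) (p m : ℕ) : ℕ → Letter := per (evenPeriod c d p m)

theorem evenPeriod_length (c d : Letter) {p : ℕ} (m : ℕ) (hp : 3 ≤ p) :
    (evenPeriod c d p m).length = (2 * m + 1) * p := by
  have h1 : p - 1 + 1 = p := by omega
  simp only [evenPeriod, List.length_append, pw_length, List.length_replicate, List.length_cons,
    List.length_nil, Nat.zero_add, h1]
  have : (2 * m + 1) * p = m * p + m * p + p := by ring
  omega

theorem evenPeriod_getD (c d : Letter) {p m : ℕ} (hp : 3 ≤ p) (i s : ℕ) (hi : i ≤ 2 * m)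
    (hs : s < p) :
    (evenPeriod c d p m).getD (i * p + s) la =
      if (i < m ∧ s = p - 1) ∨ (m ≤ i ∧ s = p - 2) ∨ (i = 2 * m ∧ s = p - 1) then d else c := by
  have l1 : (List.replicate (p - 1) c ++ [d]).length = p := by simp; omega
  have l2 : (d :: List.replicate (p - 1) c).length = p := by simp; omega
  have g1 : ∀ s < p, (List.replicate (p - 1) c ++ [d]).getD s la = if s = p - 1 then d else c := by
    intro s hs
    by_cases h : s = p - 1
    · subst h; rw [List.getD_append_right _ _ _ _ (by simp)]; simp
    · rw [List.getD_append _ _ _ _ (by simp; omega), List.getD_replicate _ (by omega)]; simp [h]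
  have g2 : ∀ s < p, (d :: List.replicate (p - 1) c).getD s la = if s = 0 then d else c := by
    intro s hs
    cases s with
    | zero => simp
    | succ s => rw [List.getD_cons_succ, List.getD_replicate _ (by omega)]; simp
  unfold evenPeriod
  rcases Nat.lt_or_ge i m with him | him
  · have hle : (i + 1) * p ≤ m * p := Nat.mul_le_mul_right p him
    rw [Nat.add_mul, Nat.one_mul] at hle
    rw [List.getD_append _ _ _ _ (by simp only [List.length_append, pw_length, l1, l2]; omega),
      List.getD_append _ _ _ _ (by simp only [List.length_append, pw_length, l1]; omega),
      List.getD_append _ _ _ _ (by simp only [pw_length, l1]; omega)]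
    have h := pw_getD (List.replicate (p - 1) c ++ [d]) m i s him (by omega)
    rw [l1] at h
    rw [h, g1 s hs]
    congr 1
    apply propext
    omega
  · obtain ⟨j, rfl⟩ := Nat.exists_eq_add_of_le him
    have e : (m + j) * p = m * p + j * p := by ring
    by_cases hlast : j = m ∧ p - 2 ≤ s
    · obtain ⟨rfl, h2⟩ := hlast
      rw [List.getD_append_right _ _ _ _
        (by simp only [List.length_append, List.length_replicate, pw_length, l1, l2]; omega)]
      simp only [List.length_append, List.length_replicate, pw_length, l1, l2]
      have hc : s = p - 2 ∨ s = p - 1 := by omega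
      rw [if_pos (by omega)]
      rcases hc with rfl | rfl
      · rw [show (j + j) * p + (p - 2) - (j * p + (p - 2) + j * p) = 0 by omega]; rfl
      · rw [show (j + j) * p + (p - 1) - (j * p + (p - 2) + j * p) = 1 by omega]; rfl
    · have hjs : j * p + s < m * p + (p - 2) := by
        rcases Nat.lt_or_ge j m with hj | hj
        · have hle : (j + 1) * p ≤ m * p := Nat.mul_le_mul_right p hj
          rw [Nat.add_mul, Nat.one_mul] at hle
          omega
        · have : j = m := by omega
          subst this
          omega
      rw [List.getD_append _ _ _ _
        (by simp only [List.length_append, List.length_replicate, pw_length, l1, l2]; omega)]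
      by_cases hmid : j = 0 ∧ s < p - 2
      · obtain ⟨rfl, h2⟩ := hmid
        rw [List.getD_append _ _ _ _
            (by simp only [List.length_append, List.length_replicate, pw_length, l1]; omega),
          List.getD_append_right _ _ _ _ (by simp only [pw_length, l1]; omega),
          List.getD_replicate _ (by simp only [pw_length, l1]; omega), if_neg (by omega)]
      · have hjp : j = 0 ∨ p ≤ j * p := by
          rcases Nat.eq_zero_or_pos j with h | h
          · exact Or.inl h
          · exact Or.inr (Nat.le_mul_of_pos_left p h)
        rw [List.getD_append_right _ _ _ _
          (by simp only [List.length_append, List.length_replicate, pw_length, l1]; omega)]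
        simp only [List.length_append, List.length_replicate, pw_length, l1]
        -- A row of `dc^{p-1}` starts in column `p - 2`.
        by_cases hcol : p - 2 ≤ s
        · have hj : j < m := by omega
          have h := pw_getD (d :: List.replicate (p - 1) c) m j (s - (p - 2)) hj (by omega)
          rw [l2] at h
          rw [show (m + j) * p + s - (m * p + (p - 2)) = j * p + (s - (p - 2)) by omega, h,
            g2 _ (by omega)]
          congr 1
          apply propext
          omega
        · obtain ⟨j, rfl⟩ := Nat.exists_eq_succ_of_ne_zero (show j ≠ 0 by omega)
          have e2 : (j + 1) * p = j * p + p := by ring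
          have h := pw_getD (d :: List.replicate (p - 1) c) m j (s + 2) (by omega) (by omega)
          rw [l2] at h
          rw [Nat.succ_eq_add_one] at *
          rw [show (m + (j + 1)) * p + s - (m * p + (p - 2)) = j * p + (s + 2) by omega, h,
            g2 _ (by omega), if_neg (by omega), if_neg (by omega)]

theorem row_lt {p m i s : ℕ} (hi : i ≤ 2 * m) (hs : s < p) : i * p + s < (2 * m + 1) * p := by
  have : i * p ≤ 2 * m * p := Nat.mul_le_mul_right p hi
  rw [Nat.add_mul, Nat.one_mul]
  omega

theorem evenWord_row (c d : Letter) {p m : ℕ} (hp : 3 ≤ p) (i s : ℕ) (hi : i ≤ 2 * m)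
    (hs : s < p) :
    evenWord c d p m (i * p + s) =
      if (i < m ∧ s = p - 1) ∨ (m ≤ i ∧ s = p - 2) ∨ (i = 2 * m ∧ s = p - 1) then d else c := by
  rw [← evenPeriod_getD c d hp i s hi hs, evenWord, per, evenPeriod_length c d m hp,
    Nat.mod_eq_of_lt (row_lt hi hs)]

theorem evenWord_add_period (c d : Letter) {p : ℕ} (m : ℕ) (hp : 3 ≤ p) (n t : ℕ) :
    evenWord c d p m (n + (2 * m + 1) * p * t) = evenWord c d p m n := by
  rw [evenWord, per, evenPeriod_length c d m hp, Nat.add_mul_mod_self_left,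
    per, evenPeriod_length c d m hp]

theorem evenWord_first (c d : Letter) {p m : ℕ} (hp : 3 ≤ p) (hm : 1 ≤ m) (s : ℕ) (hs : s < p) :
    evenWord c d p m s = if s = p - 1 then d else c := by
  have h := evenWord_row c d hp 0 s (Nat.zero_le (2 * m)) hs
  rw [Nat.zero_mul, Nat.zero_add] at h
  rw [h]
  congr 1
  apply propext
  omega

/-! ### Block starts and comparisons -/

/-- The positions `(i, s)` (row, column) in a period of `u_L` at which a block of `a` starts. -/
def AStart (p m i s : ℕ) : Prop := (i ≤ m ∧ s = 0) ∨ (m ≤ i ∧ i < 2 * m ∧ s = p - 1)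

theorem aStart_ge {p m i s : ℕ} (hp : 3 ≤ p) (hm : 1 ≤ m) (h : AStart p m i s) :
    lexLe (evenWord la lb p m) (shiftN (evenWord la lb p m) (i * p + s)) := by
  have row := fun i s => evenWord_row la lb (m := m) hp i s
  rcases h with ⟨hi, rfl⟩ | ⟨hmi, hi, rfl⟩
  · rcases Nat.eq_zero_or_pos i with rfl | hpos
    · right
      funext n
      simp [shiftN]
    · -- The words first differ where the shifted one reads column `p - 2` of row `m`.
      left
      refine ⟨(m - i) * p + (p - 2), ?_, ?_, ?_⟩
      · intro n hn
        obtain ⟨i', s', hs', rfl⟩ : ∃ i' s', s' < p ∧ n = i' * p + s' :=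
          ⟨n / p, n % p, Nat.mod_lt _ (by omega), (Nat.div_add_mod' n p).symm⟩
        have hi' : i' ≤ m - i := by
          by_contra! hc
          have : (m - i + 1) * p ≤ i' * p := Nat.mul_le_mul_right p hc
          rw [Nat.add_mul, Nat.one_mul] at this
          omega
        have hcol : i' = m - i → s' < p - 2 := by rintro rfl; omega
        rw [shiftN, show i * p + 0 + (i' * p + s') = (i + i') * p + s' by ring,
          row _ _ (by omega) hs', row _ _ (by omega) hs']
        congr 1
        apply propext
        omega
      · rw [row _ _ (by omega) (by omega), if_neg (by omega)]
      · rw [shiftN, show i * p + 0 + ((m - i) * p + (p - 2)) = (i + (m - i)) * p + (p - 2) by ring,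
          row _ _ (by omega) (by omega), if_pos (by omega)]
  · -- The words first differ where the shifted one reads the last letter of the period.
    left
    refine ⟨(2 * m - i) * p + 0, ?_, ?_, ?_⟩
    · intro n hn
      obtain ⟨i', s', hs', rfl⟩ : ∃ i' s', s' < p ∧ n = i' * p + s' :=
        ⟨n / p, n % p, Nat.mod_lt _ (by omega), (Nat.div_add_mod' n p).symm⟩
      have hi' : i' < 2 * m - i := by
        by_contra! hc
        have : (2 * m - i) * p ≤ i' * p := Nat.mul_le_mul_right p hc
        omega
      rw [row _ _ (by omega) hs', shiftN]
      rcases Nat.eq_zero_or_pos s' with rfl | hpos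
      · rw [show i * p + (p - 1) + (i' * p + 0) = (i + i') * p + (p - 1) by ring,
          row _ _ (by omega) (by omega), if_neg (by omega), if_neg (by omega)]
      · have e : (i + i' + 1) * p = i * p + i' * p + p := by ring
        rw [show i * p + (p - 1) + (i' * p + s') = (i + i' + 1) * p + (s' - 1) by omega,
          row _ _ (by omega) (by omega)]
        congr 1
        apply propext
        omega
    · rw [row _ _ (by omega) (by omega), if_neg (by omega)]
    · rw [shiftN, show i * p + (p - 1) + ((2 * m - i) * p + 0) = (i + (2 * m - i)) * p + (p - 1)
        by ring, row _ _ (by omega) (by omega), if_pos (by omega)]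

theorem aStart_apply {p m i s : ℕ} (hp : 3 ≤ p) (hm : 1 ≤ m) (h : AStart p m i s) :
    evenWord la lb p m (i * p + s) = la := by
  unfold AStart at h
  rw [evenWord_row la lb hp i s (by omega) (by omega), if_neg (by omega)]

theorem aStart_lt {p q m i s : ℕ} (hp : 3 ≤ p) (hq : 3 ≤ q) (hm : 1 ≤ m) (h : AStart p m i s) :
    lexLt (shiftN (evenWord la lb p m) (i * p + s)) (pre la (evenWord lb la q m)) := by
  have h0 := aStart_apply hp hm h
  have row := fun i s => evenWord_row la lb (m := m) hp i s
  have v0 : evenWord lb la q m 0 = lb := by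
    rw [evenWord_first lb la hq hm _ (by omega), if_neg (by omega)]
  have v1 : evenWord lb la q m 1 = lb := by
    rw [evenWord_first lb la hq hm _ (by omega), if_neg (by omega)]
  by_cases h1 : evenWord la lb p m (i * p + s + 1) = la
  · refine ⟨1, ?_, h1, v0⟩
    intro n hn
    obtain rfl : n = 0 := by omega
    exact h0
  · -- A block of `a` of length one occurs only as `a^{p-2}` in row `m`, for `p = 3`.
    rcases h with ⟨hi, rfl⟩ | ⟨hmi, hi, rfl⟩
    · rw [show i * p + 0 + 1 = i * p + 1 by ring, row _ _ (by omega) (by omega)] at h1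
      have hc : p = 3 ∧ i = m := by
        by_contra hc
        exact h1 (if_neg (by omega))
      obtain ⟨rfl, rfl⟩ := hc
      refine ⟨2, ?_, ?_, v1⟩
      · intro n hn
        obtain rfl | rfl : n = 0 ∨ n = 1 := by omega
        · exact h0
        · rw [shiftN, show i * 3 + 0 + 1 = i * 3 + 1 by ring, row _ _ (by omega) (by omega),
            if_pos (by omega)]
          exact v0.symm
      · rw [shiftN, show i * 3 + 0 + 2 = i * 3 + 2 by ring, row _ _ (by omega) (by omega),
          if_neg (by omega)]
    · exfalso
      apply h1
      have e : (i + 1) * p = i * p + p := by ring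
      rw [show i * p + (p - 1) + 1 = (i + 1) * p + 0 by omega, row _ _ (by omega) (by omega),
        if_neg (by omega)]

theorem lexLe_pre (c : Letter) {w w' : ℕ → Letter} (h : lexLe w w') :
    lexLe (pre c w) (pre c w') := by
  rcases h with ⟨n, h1, h2, h3⟩ | rfl
  · refine Or.inl ⟨n + 1, ?_, h2, h3⟩
    intro k hk
    cases k with
    | zero => rfl
    | succ k => exact h1 k (by omega)
  · exact Or.inr rfl

/-- A word starting with `ba` lies below `v_R`, which starts with `bb`. -/
theorem lt_of_ba {q m : ℕ} (hq : 3 ≤ q) (hm : 1 ≤ m) {w : ℕ → Letter} (h0 : w 0 = lb)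
    (h1 : w 1 = la) : lexLt w (evenWord lb la q m) := by
  refine ⟨1, ?_, h1, ?_⟩
  · intro n hn
    obtain rfl : n = 0 := by omega
    rw [h0, evenWord_first lb la hq hm _ (by omega), if_neg (by omega)]
  · rw [evenWord_first lb la hq hm _ (by omega), if_neg (by omega)]

/-- A word starting with `bbaa` lies below `v_R`, which starts with `bbb` or `bbab`. -/
theorem lt_of_bbaa {q m : ℕ} (hq : 3 ≤ q) (hm : 1 ≤ m) {w : ℕ → Letter} (h0 : w 0 = lb)
    (h1 : w 1 = lb) (h2 : w 2 = la) (h3 : w 3 = la) : lexLt w (evenWord lb la q m) := by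
  have first := fun s => evenWord_first lb la hq hm s
  rcases Nat.lt_or_ge 3 q with h | h
  · refine ⟨2, ?_, h2, ?_⟩
    · intro n hn
      obtain rfl | rfl : n = 0 ∨ n = 1 := by omega
      · rw [h0, first _ (by omega), if_neg (by omega)]
      · rw [h1, first _ (by omega), if_neg (by omega)]
    · rw [first _ (by omega), if_neg (by omega)]
  · obtain rfl : q = 3 := by omega
    refine ⟨3, ?_, h3, ?_⟩
    · intro n hn
      obtain rfl | rfl | rfl : n = 0 ∨ n = 1 ∨ n = 2 := by omega
      · rw [h0, first _ (by omega), if_neg (by omega)]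
      · rw [h1, first _ (by omega), if_neg (by omega)]
      · rw [h2, first _ (by omega), if_pos (by omega)]
    · have h := evenWord_row lb la hq 1 0 (show 1 ≤ 2 * m by omega) (by omega)
      rw [if_neg (by omega)] at h
      exact h

/-! ### Admissibility -/

theorem shiftN_evenWord_mod (c d : Letter) {p : ℕ} (m : ℕ) (hp : 3 ≤ p) (k : ℕ) :
    shiftN (evenWord c d p m) k = shiftN (evenWord c d p m) (k % ((2 * m + 1) * p)) := by
  funext n
  have h := evenWord_add_period c d m hp (k % ((2 * m + 1) * p) + n) (k / ((2 * m + 1) * p))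
  rw [shiftN, shiftN, ← h]
  congr 1
  have := Nat.mod_add_div k ((2 * m + 1) * p)
  omega

theorem blockStartN_mod (c d : Letter) {p : ℕ} (m : ℕ) (hp : 3 ≤ p) (k : ℕ)
    (h : blockStartN (evenWord c d p m) k) :
    blockStartN (evenWord c d p m) (k % ((2 * m + 1) * p)) := by
  by_cases h0 : k % ((2 * m + 1) * p) = 0
  · exact Or.inl h0
  · right
    have hk := Nat.mod_add_div k ((2 * m + 1) * p)
    rcases h with rfl | h
    · simp at h0
    · rw [← evenWord_add_period c d m hp _ (k / ((2 * m + 1) * p)),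
        ← evenWord_add_period c d m hp (k % ((2 * m + 1) * p)) (k / ((2 * m + 1) * p)), hk]
      rwa [show k % ((2 * m + 1) * p) - 1 + (2 * m + 1) * p * (k / ((2 * m + 1) * p)) = k - 1
        by omega]

/-- Every block start of `u_L` within the first period is an `a`-start, a single `b` followed by an
`a`-start, or the first letter of the final `bb` of the period. -/
theorem blockStart_cases {p m k : ℕ} (hp : 3 ≤ p)
    (h : blockStartN (evenWord la lb p m) k) (hk : k < (2 * m + 1) * p) :
    (∃ i s, AStart p m i s ∧ k = i * p + s) ∨
    (evenWord la lb p m k = lb ∧ ∃ i s, AStart p m i s ∧ k + 1 = i * p + s) ∨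
    k = 2 * m * p + (p - 2) := by
  have row := fun i s => evenWord_row la lb (m := m) hp i s
  obtain ⟨i, s, hs, rfl⟩ : ∃ i s, s < p ∧ k = i * p + s :=
    ⟨k / p, k % p, Nat.mod_lt _ (by omega), (Nat.div_add_mod' k p).symm⟩
  have hi : i ≤ 2 * m := by
    by_contra! hc
    have : (2 * m + 1) * p ≤ i * p := Nat.mul_le_mul_right p hc
    omega
  rcases Nat.eq_zero_or_pos s with rfl | hpos
  · left
    refine ⟨i, 0, Or.inl ⟨?_, rfl⟩, rfl⟩
    by_contra! hc
    obtain ⟨j, rfl⟩ := Nat.exists_eq_succ_of_ne_zero (show i ≠ 0 by omega)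
    rw [Nat.succ_eq_add_one] at *
    have e : (j + 1) * p = j * p + p := by ring
    rcases h with h | h
    · omega
    · rw [show (j + 1) * p + 0 - 1 = j * p + (p - 1) by omega, row _ _ (by omega) (by omega),
        row _ _ (by omega) (by omega), if_neg (by omega), if_neg (by omega)] at h
      exact h rfl
  · have hne : evenWord la lb p m (i * p + (s - 1)) ≠ evenWord la lb p m (i * p + s) := by
      rcases h with h | h
      · omega
      · rwa [show i * p + s - 1 = i * p + (s - 1) by omega] at h
    rw [row _ _ hi (by omega), row _ _ hi hs] at hne
    rw [row _ _ hi hs]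
    by_cases hb : (i < m ∧ s = p - 1) ∨ (m ≤ i ∧ s = p - 2) ∨ (i = 2 * m ∧ s = p - 1)
    · rw [if_pos hb] at hne ⊢
      right
      rcases hb with ⟨h1, rfl⟩ | ⟨h1, rfl⟩ | ⟨h1, rfl⟩
      · have e : (i + 1) * p = i * p + p := by ring
        exact Or.inl ⟨rfl, i + 1, 0, Or.inl ⟨h1, rfl⟩, by omega⟩
      · rcases Nat.lt_or_ge i (2 * m) with h2 | h2
        · exact Or.inl ⟨rfl, i, p - 1, Or.inr ⟨h1, h2, rfl⟩, by omega⟩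
        · obtain rfl : i = 2 * m := by omega
          exact Or.inr rfl
      · rw [if_pos (by omega)] at hne
        exact absurd rfl hne
    · rw [if_neg hb] at hne
      left
      refine ⟨i, s, Or.inr ?_, rfl⟩
      by_contra hc
      rw [if_neg (by omega)] at hne
      exact hne rfl

theorem evenWord_admissible {p q m : ℕ} (hp : 3 ≤ p) (hq : 3 ≤ q) (hm : 1 ≤ m) :
    AdmissibleN (evenWord la lb p m) (pre la (evenWord lb la q m))
      (pre lb (evenWord la lb p m)) (evenWord lb la q m) (evenWord la lb p m) := by
  intro k hk
  have hsh := shiftN_evenWord_mod la lb m hp k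
  have hval : evenWord la lb p m k = evenWord la lb p m (k % ((2 * m + 1) * p)) := congrFun hsh 0
  have hk' := blockStartN_mod la lb m hp k hk
  have hlt : k % ((2 * m + 1) * p) < (2 * m + 1) * p := Nat.mod_lt _ (by positivity)
  have hab : la ≠ lb := by decide
  rw [hsh, hval]
  generalize k % ((2 * m + 1) * p) = n at hk' hlt
  rcases blockStart_cases hp hk' hlt with ⟨i, s, hA, rfl⟩ | ⟨hb, i, s, hA, he⟩ | rfl
  · refine ⟨fun _ => ⟨aStart_ge hp hm hA, aStart_lt hp hq hm hA⟩, fun h => ?_⟩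
    rw [aStart_apply hp hm hA] at h
    exact absurd h hab
  · refine ⟨fun h => absurd (h.symm.trans hb) hab, fun _ => ⟨?_, ?_⟩⟩
    · have e : shiftN (evenWord la lb p m) n =
          pre lb (shiftN (evenWord la lb p m) (i * p + s)) := by
        funext j
        cases j with
        | zero => exact hb
        | succ j => rw [pre, shiftN, shiftN, ← he]; congr 1; omega
      rw [e]
      exact lexLe_pre lb (aStart_ge hp hm hA)
    · refine lt_of_ba hq hm hb ?_
      rw [shiftN, he]
      exact aStart_apply hp hm hA
  · have e : (2 * m + 1) * p = 2 * m * p + p := by ring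
    have u0 : evenWord la lb p m (2 * m * p + (p - 2)) = lb := by
      rw [evenWord_row la lb hp _ _ le_rfl (by omega), if_pos (by omega)]
    have u1 : evenWord la lb p m (2 * m * p + (p - 2) + 1) = lb := by
      rw [show 2 * m * p + (p - 2) + 1 = 2 * m * p + (p - 1) by omega,
        evenWord_row la lb hp _ _ le_rfl (by omega), if_pos (by omega)]
    have w0 : evenWord la lb p m 0 = la := by
      rw [evenWord_first la lb hp hm _ (by omega), if_neg (by omega)]
    have w1 : evenWord la lb p m 1 = la := by
      rw [evenWord_first la lb hp hm _ (by omega), if_neg (by omega)]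
    have u2 : evenWord la lb p m (2 * m * p + (p - 2) + 2) = la := by
      rw [show 2 * m * p + (p - 2) + 2 = 0 + (2 * m + 1) * p * 1 by omega,
        evenWord_add_period la lb m hp, w0]
    have u3 : evenWord la lb p m (2 * m * p + (p - 2) + 3) = la := by
      rw [show 2 * m * p + (p - 2) + 3 = 1 + (2 * m + 1) * p * 1 by omega,
        evenWord_add_period la lb m hp, w1]
    refine ⟨fun h => absurd (h.symm.trans u0) hab, fun _ => ⟨Or.inl ⟨1, ?_, w0, u1⟩,
      lt_of_bbaa hq hm u0 u1 u2 u3⟩⟩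
    intro j hj
    obtain rfl : j = 0 := by omega
    exact u0.symm

/-- Prefixing `b` to an admissible word adds no block start except `0`, where the shift is the new word itself. -/
theorem admissible_pre {uL uR vR w : ℕ → Letter} (hw : AdmissibleN uL uR (pre lb w) vR w)
    (hlt : lexLt (pre lb w) vR) : AdmissibleN uL uR (pre lb w) vR (pre lb w) := by
  intro k hk
  cases k with
  | zero =>
    have e : shiftN (pre lb w) 0 = pre lb w := by funext n; simp [shiftN]
    rw [e]
    refine ⟨fun h => absurd h (by simp [pre, la, lb]), fun _ => ⟨Or.inr rfl, hlt⟩⟩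
  | succ j =>
    have e : shiftN (pre lb w) (j + 1) = shiftN w j := by
      funext n
      rw [shiftN, shiftN, show j + 1 + n = (j + n) + 1 by omega, pre]
    rw [e]
    refine hw j ?_
    rcases hk with h | h
    · omega
    · cases j with
      | zero => exact Or.inl rfl
      | succ j => exact Or.inr h

/-- For `p, q, r ≥ 3`, `r` even, `1/p + 1/q + 1/r < 1`, the kneading
sequences `u_L` and `v_L = b·u_L` are admissible semi-infinite words; in particular
`u_L <lex u_R` and `v_L <lex v_R` (where `v_L = b·u_L` and `u_R = a·v_R`). -/
theorem kneading_sequences_admissible_even (p q r : ℕ)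
    (hp : 3 ≤ p) (hq : 3 ≤ q) (hr : 3 ≤ r) (hreven : Even r)
    (hineq : (1 : ℝ) / p + 1 / q + 1 / r < 1) :
    AdmissibleN (uLeven p r) (pre la (vReven q r)) (pre lb (uLeven p r)) (vReven q r)
      (uLeven p r) ∧
    AdmissibleN (uLeven p r) (pre la (vReven q r)) (pre lb (uLeven p r)) (vReven q r)
      (pre lb (uLeven p r)) ∧
    lexLt (uLeven p r) (pre la (vReven q r)) ∧
    lexLt (pre lb (uLeven p r)) (vReven q r) := by
  obtain ⟨m, rfl, hm⟩ : ∃ m, r = 2 * m + 2 ∧ 1 ≤ m := by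
    obtain ⟨t, rfl⟩ := hreven
    exact ⟨t - 1, by omega, by omega⟩
  have hu : uLeven p (2 * m + 2) = evenWord la lb p m := by
    rw [uLeven, show (2 * m + 2 - 2) / 2 = m by omega]; rfl
  have hv : vReven q (2 * m + 2) = evenWord lb la q m := by
    rw [vReven, show (2 * m + 2 - 2) / 2 = m by omega]; rfl
  rw [hu, hv]
  have hadm := evenWord_admissible hp hq hm
  have hA : AStart p m 0 0 := Or.inl ⟨Nat.zero_le m, rfl⟩
  have hltu := aStart_lt hp hq hm hA
  have hltv : lexLt (pre lb (evenWord la lb p m)) (evenWord lb la q m) := by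
    refine lt_of_ba hq hm rfl ?_
    have h := aStart_apply hp hm hA
    rw [Nat.zero_mul] at h
    exact h
  have e : shiftN (evenWord la lb p m) (0 * p + 0) = evenWord la lb p m := by
    funext n; simp [shiftN]
  rw [e] at hltu
  exact ⟨hadm, admissible_pre hadm hltv, hltu, hltv⟩
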